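/- For a fixed invertible n×n complex matrix B and −1 ≤ p < 0, the map A ↦ tr((B* A^p B)^{1/p}) is concave on positive definite n×n matrices. -/

import Mathlib

open Matrix ComplexOrder

/-- Functional calculus for Hermitian matrices: apply `f` to the eigenvalues. -/
noncomputable def mfun {m : Type*} [Fintype m] [DecidableEq m] (f : ℝ → ℝ)
    (A : Matrix m m ℂ) : Matrix m m ℂ :=
  if hA : A.IsHermitian then
    (hA.eigenvectorUnitary : Matrix m m ℂ) *
      Matrix.diagonal (fun i => (f (hA.eigenvalues i) : ℂ)) *
      (star (hA.eigenvectorUnitary : Matrix m m ℂ))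
  else 0

/-- Real matrix power via the functional calculus. -/
noncomputable def mpow {m : Type*} [Fintype m] [DecidableEq m]
    (A : Matrix m m ℂ) (p : ℝ) : Matrix m m ℂ :=
  mfun (fun x => x ^ p) A

/-!
Put `X = Bᴴ A ^ p B`. Young's trace inequality exhibits `tr X ^ (1 / p)` as the maximum over
positive definite `Z` of `(tr (X⁻¹ Z ^ (1 + p)) - (1 + p) tr Z) / (-p)`, attained at
`Z = X ^ (1 / p)`. A partial maximum of a jointly concave function is concave, so it is enough that
`tr (X⁻¹ Z ^ (1 + p))` is jointly concave in `(A, Z)`. By the Gauss–Markov theorem, `X⁻¹` is the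
least of the matrices `L A ^ (-p) Lᴴ` with `L` a left inverse of `B`, and for each `L` the function
`tr (L A ^ (-p) Lᴴ Z ^ (1 + p))` is jointly concave by Lieb's theorem.

Lieb's theorem holds because `x ^ q y ^ (1 - q)` is a superposition of the parallel sums
`x (l y) / (x + l y)`, `l > 0`. Applied to left multiplication by `A` and right multiplication by
`Z`, such a parallel sum is a minimum of functions that are linear in `(A, Z)`.
-/

section ConcaveOn

variable {𝕜 E F β : Type*} [Semiring 𝕜] [PartialOrder 𝕜] [AddCommMonoid E] [AddCommMonoid F]
  [AddCommMonoid β] [PartialOrder β] [Module 𝕜 E] [Module 𝕜 F] [Module 𝕜 β]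

theorem concaveOn_of_isLeast_image [IsOrderedAddMonoid β] [PosSMulMono 𝕜 β] {ι : Type*}
    {s : Set E} {f : E → β} {I : Set ι} {g : ι → E → β} (hs : Convex 𝕜 s)
    (hg : ∀ i ∈ I, ConcaveOn 𝕜 s (g i)) (hf : ∀ x ∈ s, IsLeast ((g · x) '' I) (f x)) :
    ConcaveOn 𝕜 s f := by
  refine ⟨hs, fun x hx y hy a b ha hb hab ↦ ?_⟩
  obtain ⟨i, hi, hgf⟩ := (hf _ (hs hx hy ha hb hab)).1
  have hle {z : E} (hz : z ∈ s) : f z ≤ g i z := (hf z hz).2 ⟨i, hi, rfl⟩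
  calc
    a • f x + b • f y ≤ a • g i x + b • g i y := by gcongr; exacts [hle hx, hle hy]
    _ ≤ g i (a • x + b • y) := (hg i hi).2 hx hy ha hb hab
    _ = f (a • x + b • y) := hgf

theorem concaveOn_of_isGreatest_image_prod {s : Set E} {t : Set F} {f : E → β} {g : E × F → β}
    (hg : ConcaveOn 𝕜 (s ×ˢ t) g) (hf : ∀ x ∈ s, IsGreatest ((fun y ↦ g (x, y)) '' t) (f x)) :
    ConcaveOn 𝕜 s f := by
  choose! u hu hgu using fun x hx ↦ (hf x hx).1
  have hmem {x : E} (hx : x ∈ s) : (x, u x) ∈ s ×ˢ t := Set.mk_mem_prod hx (hu x hx)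
  refine ⟨fun x hx y hy a b ha hb hab ↦ (hg.1 (hmem hx) (hmem hy) ha hb hab).1,
    fun x hx y hy a b ha hb hab ↦ ?_⟩
  have hxy := hg.1 (hmem hx) (hmem hy) ha hb hab
  calc
    a • f x + b • f y = a • g (x, u x) + b • g (y, u y) := by rw [← hgu x hx, ← hgu y hy]
    _ ≤ g (a • (x, u x) + b • (y, u y)) := hg.2 (hmem hx) (hmem hy) ha hb hab
    _ ≤ f (a • x + b • y) := (hf _ hxy.1).2 ⟨_, hxy.2, rfl⟩

end ConcaveOn

section PosDef

open scoped MatrixOrder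

variable {𝕜 m k : Type*} [RCLike 𝕜]

variable (𝕜 m) in
theorem convex_setOf_posDef : Convex ℝ {A : Matrix m m 𝕜 | A.PosDef} :=
  convex_iff_forall_pos.2 fun _ hA _ hB _ _ ha hb _ ↦ (hA.smul ha).add (hB.smul hb)

variable (𝕜 m k) in
theorem convex_setOf_posDef_prod_setOf_posDef :
    Convex ℝ ({A : Matrix m m 𝕜 | A.PosDef} ×ˢ {Z : Matrix k k 𝕜 | Z.PosDef}) :=
  (convex_setOf_posDef 𝕜 m).prod (convex_setOf_posDef 𝕜 k)

variable [Fintype m] [Fintype k]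

theorem isLinearMap_re_trace_mul_mul (M : Matrix k m 𝕜) (N : Matrix m k 𝕜) :
    IsLinearMap ℝ fun A : Matrix m m 𝕜 ↦ RCLike.re (M * A * N).trace where
  map_add A B := by rw [Matrix.mul_add, Matrix.add_mul, Matrix.trace_add, map_add]
  map_smul a A := by
    rw [Matrix.mul_smul, Matrix.smul_mul, Matrix.trace_smul, RCLike.smul_re, smul_eq_mul]

theorem trace_mul_nonneg {A B : Matrix m m 𝕜} (hA : A.PosSemidef) (hB : B.PosSemidef) :
    0 ≤ (A * B).trace := by
  classical
  obtain ⟨C, rfl⟩ := CStarAlgebra.nonneg_iff_eq_star_mul_self.1 hB.nonneg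
  rw [← mul_assoc, Matrix.trace_mul_comm, ← mul_assoc]
  exact (hA.mul_mul_conjTranspose_same C).trace_nonneg

theorem monotone_re_trace_mul_right {B : Matrix m m 𝕜} (hB : B.PosSemidef) :
    Monotone fun A : Matrix m m 𝕜 ↦ RCLike.re (A * B).trace := fun A A' h ↦ by
  have := RCLike.re_le_re (trace_mul_nonneg (Matrix.le_iff.1 h) hB)
  simpa [Matrix.sub_mul, Matrix.trace_sub] using this

variable [DecidableEq m] [DecidableEq k]

theorem posDef_rpow {A : Matrix m m 𝕜} (hA : A.PosDef) (p : ℝ) : (A ^ p).PosDef :=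
  (hA.isStrictlyPositive.rpow A p).posDef

theorem rpow_neg_eq_inv {A : Matrix m m 𝕜} (hA : A.PosDef) (p : ℝ) : A ^ (-p) = (A ^ p)⁻¹ :=
  (Matrix.inv_eq_right_inv (CFC.rpow_mul_rpow_neg p hA.isStrictlyPositive)).symm

theorem isLeast_mul_inv_mul_conjTranspose {A : Matrix m m 𝕜} (hA : A.PosDef) {B : Matrix m k 𝕜}
    (hB : Function.Injective B.mulVec) :
    IsLeast ((fun L : Matrix k m 𝕜 ↦ L * A⁻¹ * Lᴴ) '' {L | L * B = 1}) (Bᴴ * A * B)⁻¹ := by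
  set X := Bᴴ * A * B
  have hX : X.PosDef := hA.conjTranspose_mul_mul_same hB
  have hAdet := A.isUnit_iff_isUnit_det.1 hA.isUnit
  have hXdet := X.isUnit_iff_isUnit_det.1 hX.isUnit
  set G := X⁻¹ * Bᴴ * A with hG
  have hGA : G * A⁻¹ = X⁻¹ * Bᴴ := Matrix.mul_nonsing_inv_cancel_right A _ hAdet
  have hGB : G * B = 1 := by
    rw [hG, Matrix.mul_assoc, Matrix.mul_assoc, ← Matrix.mul_assoc Bᴴ,
      Matrix.nonsing_inv_mul X hXdet]
  have hGL {L : Matrix k m 𝕜} (hL : L * B = 1) : G * A⁻¹ * Lᴴ = X⁻¹ := by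
    rw [hGA, Matrix.mul_assoc, ← Matrix.conjTranspose_mul, hL, Matrix.conjTranspose_one,
      Matrix.mul_one]
  refine ⟨⟨G, hGB, hGL hGB⟩, ?_⟩
  rintro _ ⟨L, hL, rfl⟩
  have hLG : L * A⁻¹ * Gᴴ = X⁻¹ := by
    have h := congr_arg conjTranspose (hGL hL)
    rwa [Matrix.conjTranspose_mul, Matrix.conjTranspose_mul, Matrix.conjTranspose_conjTranspose,
      hA.1.inv.eq, hX.1.inv.eq, ← Matrix.mul_assoc] at h
  have hsq : L * A⁻¹ * Lᴴ - X⁻¹ = (L - G) * A⁻¹ * (L - G)ᴴ := by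
    rw [Matrix.conjTranspose_sub, Matrix.sub_mul, Matrix.sub_mul, Matrix.mul_sub, Matrix.mul_sub,
      hLG, hGL hL, hGL hGB, sub_self, sub_zero]
  rw [Matrix.le_iff, hsq]
  exact hA.inv.posSemidef.mul_mul_conjTranspose_same _

end PosDef

section DoubleTrace

open scoped MatrixOrder
open MeasureTheory Set

variable {𝕜 m k : Type*} [RCLike 𝕜] [Fintype m] [Fintype k] [DecidableEq m] [DecidableEq k]
  {A : Matrix m m 𝕜} {Z : Matrix k k 𝕜}

/-- The matrix of `C` with respect to the eigenbases of `Z` (source) and `A` (target). -/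
noncomputable def eigenCoord (hA : A.IsHermitian) (hZ : Z.IsHermitian) :
    Matrix m k 𝕜 ≃+ Matrix m k 𝕜 where
  toFun C := star (hA.eigenvectorUnitary : Matrix m m 𝕜) * C *
    (hZ.eigenvectorUnitary : Matrix k k 𝕜)
  invFun C := (hA.eigenvectorUnitary : Matrix m m 𝕜) * C *
    star (hZ.eigenvectorUnitary : Matrix k k 𝕜)
  left_inv C := by
    dsimp only
    rw [Matrix.mul_assoc _ C, ← Matrix.mul_assoc, ← Matrix.mul_assoc,
      Unitary.mul_star_self_of_mem (SetLike.coe_mem _), Matrix.one_mul, Matrix.mul_assoc,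
      Unitary.mul_star_self_of_mem (SetLike.coe_mem _), Matrix.mul_one]
  right_inv C := by
    dsimp only
    rw [Matrix.mul_assoc _ C, ← Matrix.mul_assoc, ← Matrix.mul_assoc,
      Unitary.star_mul_self_of_mem (SetLike.coe_mem _), Matrix.one_mul, Matrix.mul_assoc,
      Unitary.star_mul_self_of_mem (SetLike.coe_mem _), Matrix.mul_one]
  map_add' C D := by rw [Matrix.mul_add, Matrix.add_mul]

open Classical in
/-- The double operator integral `Re Tr (Cᴴ φ(L_A, R_Z) C)`, where `φ` is applied to the
commuting operators `L_A` of left multiplication by `A` and `R_Z` of right multiplication by `Z`;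
zero unless `A` and `Z` are Hermitian. -/
noncomputable def doubleTrace (φ : ℝ → ℝ → ℝ) (A : Matrix m m 𝕜) (Z : Matrix k k 𝕜)
    (C : Matrix m k 𝕜) : ℝ :=
  if h : A.IsHermitian ∧ Z.IsHermitian then
    ∑ i, ∑ j, φ (h.1.eigenvalues i) (h.2.eigenvalues j) * RCLike.normSq (eigenCoord h.1 h.2 C i j)
  else 0

theorem doubleTrace_eq_sum (hA : A.IsHermitian) (hZ : Z.IsHermitian) (φ : ℝ → ℝ → ℝ)
    (C : Matrix m k 𝕜) :
    doubleTrace φ A Z C = ∑ i, ∑ j, φ (hA.eigenvalues i) (hZ.eigenvalues j) *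
      RCLike.normSq (eigenCoord hA hZ C i j) :=
  dif_pos ⟨hA, hZ⟩

theorem re_trace_conjTranspose_mul_diagonal_mul_mul_diagonal (C : Matrix m k 𝕜) (a : m → ℝ)
    (z : k → ℝ) :
    RCLike.re (Cᴴ * diagonal (fun i ↦ (a i : 𝕜)) * C * diagonal (fun j ↦ (z j : 𝕜))).trace =
      ∑ i, ∑ j, a i * z j * RCLike.normSq (C i j) := by
  rw [Matrix.trace, Finset.sum_comm, map_sum]
  refine Finset.sum_congr rfl fun j _ ↦ ?_
  rw [Matrix.diag_apply, Matrix.mul_diagonal, Matrix.mul_apply, Finset.sum_mul, map_sum]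
  refine Finset.sum_congr rfl fun i _ ↦ ?_
  rw [Matrix.mul_diagonal, Matrix.conjTranspose_apply]
  simp only [RCLike.star_def, RCLike.mul_re, RCLike.conj_re, RCLike.ofReal_re, RCLike.conj_im,
    RCLike.ofReal_im, mul_zero, sub_zero, RCLike.mul_im, neg_mul, zero_add, sub_neg_eq_add,
    RCLike.normSq_apply]
  ring

theorem doubleTrace_mul (hA : A.IsHermitian) (hZ : Z.IsHermitian) (f g : ℝ → ℝ)
    (C : Matrix m k 𝕜) :
    doubleTrace (fun x y ↦ f x * g y) A Z C =
      RCLike.re (Cᴴ * cfc f A * C * cfc g Z).trace := by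
  rw [doubleTrace_eq_sum hA hZ, ← re_trace_conjTranspose_mul_diagonal_mul_mul_diagonal,
    hA.cfc_eq f, hZ.cfc_eq g, Matrix.IsHermitian.cfc, Matrix.IsHermitian.cfc,
    Unitary.conjStarAlgAut_apply, Unitary.conjStarAlgAut_apply]
  simp only [← Matrix.mul_assoc]
  rw [Matrix.trace_mul_comm _ (star (hZ.eigenvectorUnitary : Matrix k k 𝕜))]
  simp [eigenCoord, Matrix.star_eq_conjTranspose, Matrix.mul_assoc, Function.comp_def]

theorem doubleTrace_fst (hA : A.IsHermitian) (hZ : Z.IsHermitian) (C : Matrix m k 𝕜) :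
    doubleTrace (fun x _ ↦ x) A Z C = RCLike.re (Cᴴ * A * C).trace := by
  simpa [cfc_id' ℝ A hA.isSelfAdjoint, cfc_const_one ℝ Z hZ.isSelfAdjoint]
    using doubleTrace_mul hA hZ (fun x ↦ x) (fun _ ↦ 1) C

theorem doubleTrace_snd (hA : A.IsHermitian) (hZ : Z.IsHermitian) (C : Matrix m k 𝕜) :
    doubleTrace (fun _ y ↦ y) A Z C = RCLike.re (Cᴴ * C * Z).trace := by
  simpa [cfc_const_one ℝ A hA.isSelfAdjoint, cfc_id' ℝ Z hZ.isSelfAdjoint]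
    using doubleTrace_mul hA hZ (fun _ ↦ 1) (fun y ↦ y) C

theorem doubleTrace_rpow_mul_rpow (hA : A.PosSemidef) (hZ : Z.PosSemidef) (p q : ℝ)
    (C : Matrix m k 𝕜) :
    doubleTrace (fun x y ↦ x ^ p * y ^ q) A Z C = RCLike.re (Cᴴ * A ^ p * C * Z ^ q).trace := by
  rw [doubleTrace_mul hA.1 hZ.1, CFC.rpow_eq_cfc_real hA.nonneg, CFC.rpow_eq_cfc_real hZ.nonneg]

theorem doubleTrace_mono (hA : A.PosDef) (hZ : Z.PosDef) {φ ψ : ℝ → ℝ → ℝ}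
    (h : ∀ x > 0, ∀ y > 0, φ x y ≤ ψ x y) (C : Matrix m k 𝕜) :
    doubleTrace φ A Z C ≤ doubleTrace ψ A Z C := by
  rw [doubleTrace_eq_sum hA.1 hZ.1, doubleTrace_eq_sum hA.1 hZ.1]
  exact Finset.sum_le_sum fun i _ ↦ Finset.sum_le_sum fun j _ ↦ mul_le_mul_of_nonneg_right
    (h _ (hA.eigenvalues_pos i) _ (hZ.eigenvalues_pos j)) (RCLike.normSq_nonneg _)

theorem doubleTrace_congr (hA : A.PosDef) (hZ : Z.PosDef) {φ ψ : ℝ → ℝ → ℝ}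
    (h : ∀ x > 0, ∀ y > 0, φ x y = ψ x y) (C : Matrix m k 𝕜) :
    doubleTrace φ A Z C = doubleTrace ψ A Z C :=
  (doubleTrace_mono hA hZ (fun x hx y hy ↦ (h x hx y hy).le) C).antisymm
    (doubleTrace_mono hA hZ (fun x hx y hy ↦ (h x hx y hy).ge) C)

theorem doubleTrace_const_mul (c : ℝ) (φ : ℝ → ℝ → ℝ) (A : Matrix m m 𝕜) (Z : Matrix k k 𝕜)
    (C : Matrix m k 𝕜) :
    doubleTrace (fun x y ↦ c * φ x y) A Z C = c * doubleTrace φ A Z C := by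
  unfold doubleTrace
  split_ifs
  · simp only [Finset.mul_sum, mul_assoc]
  · exact (mul_zero c).symm

theorem doubleTrace_add (φ ψ : ℝ → ℝ → ℝ) (A : Matrix m m 𝕜) (Z : Matrix k k 𝕜)
    (C : Matrix m k 𝕜) :
    doubleTrace (fun x y ↦ φ x y + ψ x y) A Z C = doubleTrace φ A Z C + doubleTrace ψ A Z C := by
  unfold doubleTrace
  split_ifs
  · simp only [add_mul, Finset.sum_add_distrib]
  · exact (add_zero 0).symm

variable {α : Type*} [MeasurableSpace α] {μ : Measure α} {φ : α → ℝ → ℝ → ℝ}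

theorem integrable_doubleTrace (hA : A.PosDef) (hZ : Z.PosDef)
    (hφ : ∀ x > 0, ∀ y > 0, Integrable (φ · x y) μ) (C : Matrix m k 𝕜) :
    Integrable (fun l ↦ doubleTrace (φ l) A Z C) μ := by
  simp only [doubleTrace_eq_sum hA.1 hZ.1]
  exact integrable_finsetSum _ fun i _ ↦ integrable_finsetSum _ fun j _ ↦
    (hφ _ (hA.eigenvalues_pos i) _ (hZ.eigenvalues_pos j)).mul_const _

theorem doubleTrace_integral (hA : A.PosDef) (hZ : Z.PosDef)
    (hφ : ∀ x > 0, ∀ y > 0, Integrable (φ · x y) μ) (C : Matrix m k 𝕜) :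
    doubleTrace (fun x y ↦ ∫ l, φ l x y ∂μ) A Z C = ∫ l, doubleTrace (φ l) A Z C ∂μ := by
  have hint (i : m) (j : k) := (hφ _ (hA.eigenvalues_pos i) _ (hZ.eigenvalues_pos j)).mul_const
    (RCLike.normSq (eigenCoord hA.1 hZ.1 C i j))
  simp only [doubleTrace_eq_sum hA.1 hZ.1]
  rw [integral_finsetSum _ fun i _ ↦ integrable_finsetSum _ fun j _ ↦ hint i j]
  refine Finset.sum_congr rfl fun i _ ↦ ?_
  rw [integral_finsetSum _ fun j _ ↦ hint i j]
  exact Finset.sum_congr rfl fun j _ ↦ (integral_mul_const _ _).symm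

end DoubleTrace

section Lieb

open scoped MatrixOrder
open MeasureTheory Set

variable {𝕜 m k : Type*} [RCLike 𝕜]

theorem isLeast_mul_normSq_add_mul_normSq_sub {a b : ℝ} (ha : 0 < a) (hb : 0 < b) (c : 𝕜) :
    IsLeast (range fun d : 𝕜 ↦ a * RCLike.normSq d + b * RCLike.normSq (c - d))
      (a * b / (a + b) * RCLike.normSq c) := by
  have hab : 0 < a + b := add_pos ha hb
  have complete_sq (d : 𝕜) : a * RCLike.normSq d + b * RCLike.normSq (c - d) =
      a * b / (a + b) * RCLike.normSq c +
        (a + b) * RCLike.normSq (d - ((b / (a + b) : ℝ) : 𝕜) * c) := by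
    simp only [RCLike.normSq_apply, map_sub, RCLike.re_ofReal_mul, RCLike.im_ofReal_mul]
    field_simp
    ring
  refine ⟨⟨((b / (a + b) : ℝ) : 𝕜) * c, ?_⟩, ?_⟩
  · simp only [complete_sq, sub_self, map_zero, mul_zero, add_zero]
  · rintro _ ⟨d, rfl⟩
    simp only [complete_sq]
    exact le_add_of_nonneg_right (mul_nonneg hab.le (RCLike.normSq_nonneg _))

theorem exists_measure_rpow_mul_rpow_eq_integral {q : ℝ} (hq : q ∈ Ioo 0 1) :
    ∃ μ : Measure ℝ, ∀ {x y : ℝ}, 0 < x → 0 < y →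
      IntegrableOn (fun l ↦ l ^ (q - 2) * (x * (l * y) / (x + l * y))) (Ioi 0) μ ∧
      x ^ q * y ^ (1 - q) = ∫ l in Ioi 0, l ^ (q - 2) * (x * (l * y) / (x + l * y)) ∂μ := by
  obtain ⟨μ, hμ⟩ := Real.exists_measure_rpow_eq_integral_rpowIntegrand₀₁ hq
  refine ⟨μ, fun {x y} hx hy ↦ ?_⟩
  obtain ⟨hint, hrepr⟩ := hμ (x / y) (div_pos hx hy).le
  have homogenize : EqOn (fun l ↦ Real.rpowIntegrand₀₁ q l (x / y) * y)
      (fun l ↦ l ^ (q - 2) * (x * (l * y) / (x + l * y))) (Ioi 0) := fun l (hl : 0 < l) ↦ by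
    have hpow : l ^ (q - 1) = l ^ (q - 2) * l := by
      rw [← Real.rpow_add_one hl.ne']
      ring_nf
    dsimp only
    rw [Real.rpowIntegrand₀₁_eq_pow_div hq hl.le (div_pos hx hy).le, hpow]
    field_simp
    ring
  refine ⟨(integrableOn_congr_fun homogenize measurableSet_Ioi).1 (hint.mul_const y), ?_⟩
  rw [← setIntegral_congr_fun measurableSet_Ioi homogenize, integral_mul_const, ← hrepr,
    Real.div_rpow hx.le hy.le, Real.rpow_sub hy, Real.rpow_one]
  field_simp

variable [Fintype m] [Fintype k] [DecidableEq m] [DecidableEq k]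
  {A : Matrix m m 𝕜} {Z : Matrix k k 𝕜}

theorem isLeast_doubleTrace_add_doubleTrace_sub (hA : A.PosDef) (hZ : Z.PosDef)
    {φ ψ : ℝ → ℝ → ℝ} (hφ : ∀ x > 0, ∀ y > 0, 0 < φ x y) (hψ : ∀ x > 0, ∀ y > 0, 0 < ψ x y)
    (C : Matrix m k 𝕜) :
    IsLeast (range fun D ↦ doubleTrace φ A Z D + doubleTrace ψ A Z (C - D))
      (doubleTrace (fun x y ↦ φ x y * ψ x y / (φ x y + ψ x y)) A Z C) := by
  have hmin (i : m) (j : k) := isLeast_mul_normSq_add_mul_normSq_sub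
    (hφ _ (hA.eigenvalues_pos i) _ (hZ.eigenvalues_pos j))
    (hψ _ (hA.eigenvalues_pos i) _ (hZ.eigenvalues_pos j)) (eigenCoord hA.1 hZ.1 C i j)
  simp only [doubleTrace_eq_sum hA.1 hZ.1, ← Finset.sum_add_distrib, map_sub, Matrix.sub_apply]
  constructor
  · choose D hD using fun i j ↦ (hmin i j).1
    refine ⟨(eigenCoord hA.1 hZ.1).symm (of D), ?_⟩
    simp only [AddEquiv.apply_symm_apply, of_apply, hD]
  · rintro _ ⟨D, rfl⟩
    exact Finset.sum_le_sum fun i _ ↦ Finset.sum_le_sum fun j _ ↦ (hmin i j).2 ⟨_, rfl⟩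

theorem concaveOn_doubleTrace_fst (C : Matrix m k 𝕜) :
    ConcaveOn ℝ ({A : Matrix m m 𝕜 | A.PosDef} ×ˢ {Z : Matrix k k 𝕜 | Z.PosDef})
      fun P ↦ doubleTrace (fun x _ ↦ x) P.1 P.2 C :=
  (((isLinearMap_re_trace_mul_mul Cᴴ C).mk' _ ∘ₗ LinearMap.fst ℝ _ _).concaveOn
    (convex_setOf_posDef_prod_setOf_posDef 𝕜 m k)).congr
    fun _ hP ↦ (doubleTrace_fst hP.1.1 hP.2.1 C).symm

theorem concaveOn_doubleTrace_snd (C : Matrix m k 𝕜) :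
    ConcaveOn ℝ ({A : Matrix m m 𝕜 | A.PosDef} ×ˢ {Z : Matrix k k 𝕜 | Z.PosDef})
      fun P ↦ doubleTrace (fun _ y ↦ y) P.1 P.2 C := by
  have h := ((isLinearMap_re_trace_mul_mul (Cᴴ * C) 1).mk' _ ∘ₗ
    LinearMap.snd ℝ (Matrix m m 𝕜) _).concaveOn (convex_setOf_posDef_prod_setOf_posDef 𝕜 m k)
  refine h.congr fun P hP ↦ ?_
  simp [doubleTrace_snd hP.1.1 hP.2.1]

theorem concaveOn_doubleTrace_parallelSum {l : ℝ} (hl : 0 < l) (C : Matrix m k 𝕜) :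
    ConcaveOn ℝ ({A : Matrix m m 𝕜 | A.PosDef} ×ˢ {Z : Matrix k k 𝕜 | Z.PosDef})
      fun P ↦ doubleTrace (fun x y ↦ x * (l * y) / (x + l * y)) P.1 P.2 C := by
  refine concaveOn_of_isLeast_image (I := univ) (convex_setOf_posDef_prod_setOf_posDef 𝕜 m k)
    (g := fun D P ↦ doubleTrace (fun x _ ↦ x) P.1 P.2 D +
      doubleTrace (fun _ y ↦ l * y) P.1 P.2 (C - D)) (fun D _ ↦ ?_) fun P hP ↦ ?_
  · simp only [doubleTrace_const_mul]
    exact (concaveOn_doubleTrace_fst D).add ((concaveOn_doubleTrace_snd (C - D)).smul hl.le)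
  · rw [image_univ]
    exact isLeast_doubleTrace_add_doubleTrace_sub hP.1 hP.2 (fun x hx _ _ ↦ hx)
      (fun _ _ y hy ↦ mul_pos hl hy) C

theorem concaveOn_re_trace_rpow_mul_rpow {q : ℝ} (hq : q ∈ Icc 0 1) (C : Matrix m k 𝕜) :
    ConcaveOn ℝ ({A : Matrix m m 𝕜 | A.PosDef} ×ˢ {Z : Matrix k k 𝕜 | Z.PosDef})
      fun P ↦ RCLike.re (Cᴴ * P.1 ^ q * C * P.2 ^ (1 - q)).trace := by
  refine ConcaveOn.congr (f := fun P ↦ doubleTrace (fun x y ↦ x ^ q * y ^ (1 - q)) P.1 P.2 C) ?_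
    fun P hP ↦ doubleTrace_rpow_mul_rpow hP.1.posSemidef hP.2.posSemidef q (1 - q) C
  rcases hq.1.eq_or_lt with rfl | hq₀
  · simpa using concaveOn_doubleTrace_snd C
  rcases hq.2.eq_or_lt with rfl | hq₁
  · simpa using concaveOn_doubleTrace_fst C
  obtain ⟨μ, hμ⟩ := exists_measure_rpow_mul_rpow_eq_integral ⟨hq₀, hq₁⟩
  have hint (x : ℝ) (hx : x > 0) (y : ℝ) (hy : y > 0) := (hμ hx hy).1
  have hconc : ConcaveOn ℝ ({A : Matrix m m 𝕜 | A.PosDef} ×ˢ {Z : Matrix k k 𝕜 | Z.PosDef})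
      fun P ↦ ∫ l in Ioi 0,
        doubleTrace (fun x y ↦ l ^ (q - 2) * (x * (l * y) / (x + l * y))) P.1 P.2 C ∂μ := by
    refine integral_concaveOn_of_integrand_ae (convex_setOf_posDef_prod_setOf_posDef 𝕜 m k) ?_
      fun P hP ↦ integrable_doubleTrace hP.1 hP.2 hint C
    filter_upwards [ae_restrict_mem measurableSet_Ioi] with l hl
    simp only [doubleTrace_const_mul]
    exact (concaveOn_doubleTrace_parallelSum hl C).smul (Real.rpow_nonneg (mem_Ioi.1 hl).le _)
  refine hconc.congr fun P hP ↦ ?_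
  dsimp only
  rw [← doubleTrace_integral hP.1 hP.2 hint]
  exact doubleTrace_congr hP.1 hP.2 (fun x hx y hy ↦ (hμ hx hy).2.symm) C

end Lieb

section Epstein

open scoped MatrixOrder
open Set

variable {𝕜 m k : Type*} [RCLike 𝕜] [Fintype m] [Fintype k] [DecidableEq m] [DecidableEq k]

theorem concaveOn_re_trace_inv_mul_rpow {B : Matrix m k 𝕜} (hB : Function.Injective B.mulVec)
    {p : ℝ} (hp : p ∈ Icc (-1) 0) :
    ConcaveOn ℝ ({A : Matrix m m 𝕜 | A.PosDef} ×ˢ {Z : Matrix k k 𝕜 | Z.PosDef})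
      fun P ↦ RCLike.re ((Bᴴ * P.1 ^ p * B)⁻¹ * P.2 ^ (1 + p)).trace := by
  refine concaveOn_of_isLeast_image (I := {L : Matrix k m 𝕜 | L * B = 1})
    (g := fun L P ↦ RCLike.re (L * P.1 ^ (-p) * Lᴴ * P.2 ^ (1 + p)).trace)
    (convex_setOf_posDef_prod_setOf_posDef 𝕜 m k) (fun L _ ↦ ?_) fun P hP ↦ ?_
  · have hq : -p ∈ Icc 0 1 := ⟨neg_nonneg.2 hp.2, neg_le.1 hp.1⟩
    simpa only [conjTranspose_conjTranspose, sub_neg_eq_add]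
      using concaveOn_re_trace_rpow_mul_rpow hq Lᴴ
  · have h := (monotone_re_trace_mul_right (posDef_rpow hP.2 (1 + p)).posSemidef).map_isLeast
      (isLeast_mul_inv_mul_conjTranspose (posDef_rpow hP.1 p) hB)
    simpa only [image_image, rpow_neg_eq_inv hP.1] using h

theorem re_trace_rpow_mul_rpow_le {w : ℝ} (hw : w ∈ Icc 0 1) {X Z : Matrix k k 𝕜}
    (hX : X.PosDef) (hZ : Z.PosDef) :
    RCLike.re (X ^ w * Z ^ (1 - w)).trace ≤
      w * RCLike.re X.trace + (1 - w) * RCLike.re Z.trace :=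
  calc
    RCLike.re (X ^ w * Z ^ (1 - w)).trace = doubleTrace (fun x z ↦ x ^ w * z ^ (1 - w)) X Z 1 := by
      rw [doubleTrace_rpow_mul_rpow hX.posSemidef hZ.posSemidef, conjTranspose_one,
        Matrix.one_mul, Matrix.mul_one]
    _ ≤ doubleTrace (fun x z ↦ w * x + (1 - w) * z) X Z 1 :=
      doubleTrace_mono hX hZ (fun x hx z hz ↦ Real.geom_mean_le_arith_mean2_weighted hw.1
        (sub_nonneg.2 hw.2) hx.le hz.le (add_sub_cancel w 1)) 1
    _ = w * RCLike.re X.trace + (1 - w) * RCLike.re Z.trace := by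
      rw [doubleTrace_add, doubleTrace_const_mul, doubleTrace_const_mul, doubleTrace_fst hX.1 hZ.1,
        doubleTrace_snd hX.1 hZ.1, conjTranspose_one, Matrix.one_mul, Matrix.one_mul,
        Matrix.mul_one, Matrix.one_mul]

theorem isGreatest_re_trace_inv_mul_rpow_sub {p : ℝ} (hp₀ : -1 ≤ p) (hp₁ : p < 0)
    {X : Matrix k k 𝕜} (hX : X.PosDef) :
    IsGreatest ((fun Z ↦ (-p)⁻¹ * (RCLike.re (X⁻¹ * Z ^ (1 + p)).trace -
      (1 + p) * RCLike.re Z.trace)) '' {Z : Matrix k k 𝕜 | Z.PosDef})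
      (RCLike.re (X ^ (1 / p)).trace) := by
  have hp : p ≠ 0 := hp₁.ne
  have hY : (X ^ (1 / p)).PosDef := posDef_rpow hX _
  have hYX : (X ^ (1 / p)) ^ (-p) = X⁻¹ := by
    rw [CFC.rpow_rpow X _ _ (one_div_ne_zero hp) hX.isStrictlyPositive,
      show 1 / p * -p = -1 by field_simp, rpow_neg_eq_inv hX, CFC.rpow_one X hX.posSemidef.nonneg]
  refine ⟨⟨_, hY, ?_⟩, ?_⟩
  · dsimp only
    rw [← hYX, ← CFC.rpow_add hY.isUnit, neg_add_cancel_comm_assoc,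
      CFC.rpow_one _ hY.posSemidef.nonneg]
    field_simp
    ring
  · rintro _ ⟨Z, hZ, rfl⟩
    have young := re_trace_rpow_mul_rpow_le (w := -p) ⟨neg_nonneg.2 hp₁.le, neg_le.1 hp₀⟩ hY hZ
    rw [hYX, sub_neg_eq_add] at young
    dsimp only
    rw [inv_mul_le_iff₀ (neg_pos.2 hp₁)]
    linarith

theorem concaveOn_re_trace_conjTranspose_mul_rpow_mul_rpow {B : Matrix m k 𝕜}
    (hB : Function.Injective B.mulVec) {p : ℝ} (hp₀ : -1 ≤ p) (hp₁ : p < 0) :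
    ConcaveOn ℝ {A : Matrix m m 𝕜 | A.PosDef}
      fun A ↦ RCLike.re ((Bᴴ * A ^ p * B) ^ (1 / p)).trace := by
  have htrace := ((isLinearMap_re_trace_mul_mul (1 : Matrix k k 𝕜) 1).mk' _ ∘ₗ
      LinearMap.snd ℝ (Matrix m m 𝕜) _).convexOn
      (convex_setOf_posDef_prod_setOf_posDef 𝕜 m k)
  have hconc := ((concaveOn_re_trace_inv_mul_rpow hB ⟨hp₀, hp₁.le⟩).sub
    (htrace.smul (neg_le_iff_add_nonneg'.1 hp₀))).smul (inv_nonneg.2 (neg_nonneg.2 hp₁.le))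
  refine concaveOn_of_isGreatest_image_prod hconc fun A hA ↦ ?_
  simpa using isGreatest_re_trace_inv_mul_rpow_sub hp₀ hp₁
    ((posDef_rpow hA p).conjTranspose_mul_mul_same hB)

end Epstein

section Power

open scoped MatrixOrder

variable {m k : Type*} [Fintype m] [Fintype k] [DecidableEq m] [DecidableEq k]

theorem mfun_eq_cfc {A : Matrix m m ℂ} (hA : A.IsHermitian) (f : ℝ → ℝ) :
    mfun f A = cfc f A := by
  rw [hA.cfc_eq f, mfun, dif_pos hA, Matrix.IsHermitian.cfc, Unitary.conjStarAlgAut_apply]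
  rfl

theorem mpow_eq_rpow {A : Matrix m m ℂ} (hA : A.PosSemidef) (p : ℝ) : mpow A p = A ^ p := by
  rw [mpow, mfun_eq_cfc hA.1, CFC.rpow_eq_cfc_real hA.nonneg]

theorem epstein_concavity_neg_general {B : Matrix m k ℂ} (hB : Function.Injective B.mulVec)
    {p : ℝ} (hp₀ : -1 ≤ p) (hp₁ : p < 0) :
    ConcaveOn ℝ {A : Matrix m m ℂ | A.PosDef}
      fun A ↦ (mpow (Bᴴ * mpow A p * B) (1 / p)).trace.re :=
  (concaveOn_re_trace_conjTranspose_mul_rpow_mul_rpow hB hp₀ hp₁).congr fun A hA ↦ by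
    have hX := (posDef_rpow hA p).conjTranspose_mul_mul_same hB
    rw [mpow_eq_rpow hA.posSemidef, mpow_eq_rpow hX.posSemidef, RCLike.re_eq_complex_re]

end Power

theorem epstein_concavity_neg {n : ℕ} (B : Matrix (Fin n) (Fin n) ℂ) (hB : IsUnit B)
    (p : ℝ) (hp0 : -1 ≤ p) (hp1 : p < 0) (A₀ A₁ : Matrix (Fin n) (Fin n) ℂ)
    (hA₀ : A₀.PosDef) (hA₁ : A₁.PosDef) (t : ℝ) (ht0 : 0 ≤ t) (ht1 : t ≤ 1) :
    (1 - t) * (mpow (Bᴴ * mpow A₀ p * B) (1/p)).trace.re +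
        t * (mpow (Bᴴ * mpow A₁ p * B) (1/p)).trace.re ≤
      (mpow (Bᴴ * mpow (((1 - t : ℝ) : ℂ) • A₀ + ((t : ℝ) : ℂ) • A₁) p * B) (1/p)).trace.re := by
  simp only [Complex.coe_smul]
  exact (epstein_concavity_neg_general (Matrix.mulVec_injective_of_isUnit hB) hp0 hp1).2 hA₀ hA₁
    (sub_nonneg.2 ht1) ht0 (sub_add_cancel 1 t)
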